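/- An extension of a discrete p-toral group by a discrete p-toral group is discrete p-toral: if N ⊴ G with N and G/N both discrete p-toral, then G is discrete p-toral. -/

import Mathlib

/-- ℚ/ℤ as an additive group. -/
abbrev QmodZ : Type := ℚ ⧸ AddSubgroup.zmultiples (1 : ℚ)

/-- The Prüfer p-group ℤ/p^∞, realized as the p-primary component of ℚ/ℤ,
written multiplicatively. -/
def Prufer (p : ℕ) [Fact p.Prime] : Type :=
  Multiplicative (AddCommGroup.primaryComponent QmodZ p)

instance (p : ℕ) [Fact p.Prime] : CommGroup (Prufer p) :=
  Multiplicative.commGroup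

/-- A group `S` is *discrete p-toral* if it has a normal subgroup `S₀` isomorphic to a
finite direct product of copies of `ℤ/p^∞` such that `S/S₀` is a finite `p`-group. -/
def IsDiscretePToral (p : ℕ) [Fact p.Prime] (S : Type*) [Group S] : Prop :=
  ∃ S₀ : Subgroup S, ∃ _ : S₀.Normal,
    (∃ r : ℕ, Nonempty (S₀ ≃* (Fin r → Prufer p))) ∧
    Finite (S ⧸ S₀) ∧ IsPGroup p (S ⧸ S₀)

/-!
Write `N₀` and `Q₀` for the finite-index tori of `N` and `G ⧸ N`. They have no proper subgroups of
finite index, so finite-index subgroups of `G` have index at most `|N : N₀| |G ⧸ N : Q₀|`, and one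
of largest index, `P`, has no proper subgroups of finite index either. Such a `P` centralizes every
element with finitely many `P`-conjugates.

The subgroup `N₀` lies in `P`, is normal there and has finitely many elements of each order, so it
is central in `P`. As `Q₀` is abelian, the conjugates of `x ∈ P` all have the same image in `Q₀`;
they meet only finitely many cosets of `N₀`, and in each coset only finitely many elements have the
order of `x`, because two such elements differ by a central torsion element of bounded order. Hence
`x` is central and `P` is abelian.

Finally, an abelian `p`-group without proper subgroups of finite index is divisible, and a divisible
abelian `p`-group with finite `p`-torsion is determined by the order of that torsion.
-/

open scoped IsMulCommutative

theorem exists_addMonoidHom_zmod_ne_zero {V : Type*} [AddCommGroup V] (p : ℕ) [Fact p.Prime]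
    (hV : ∀ v : V, p • v = 0) {v : V} (hv : v ≠ 0) : ∃ φ : V →+ ZMod p, φ v ≠ 0 := by
  let _ : Module (ZMod p) V := AddCommGroup.zmodModule (n := p) hV
  obtain ⟨φ, hφ⟩ : ∃ φ : V →ₗ[ZMod p] ZMod p, φ v ≠ 0 :=
    Module.Projective.exists_dual_ne_zero _ hv
  exact ⟨φ.toAddMonoidHom, hφ⟩

section NoProperFiniteIndex

/-- A group is its own only subgroup of finite index. This stands in for connectedness: the
subgroup `S₀` of a discrete `p`-toral group `S` is the largest subgroup with this property. -/
def NoProperFiniteIndex (P : Type*) [Group P] : Prop :=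
  ∀ L : Subgroup P, L.FiniteIndex → L = ⊤

variable {P H : Type*} [Group P] [Group H]

namespace NoProperFiniteIndex

theorem of_surjective (hP : NoProperFiniteIndex P) {f : P →* H} (hf : Function.Surjective f) :
    NoProperFiniteIndex H := by
  intro L hL
  refine Subgroup.comap_injective hf ((hP _ ⟨?_⟩).trans (Subgroup.comap_top f).symm)
  rw [Subgroup.index_comap_of_surjective L hf]
  exact hL.index_ne_zero

theorem of_forall_pow_surjective {A : Type*} [CommGroup A]
    (hA : ∀ n ≠ 0, Function.Surjective fun a : A => a ^ n) : NoProperFiniteIndex A := by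
  refine fun L hL => top_unique fun x _ => ?_
  obtain ⟨y, rfl⟩ := hA L.index hL.index_ne_zero x
  exact L.pow_index_mem y

theorem range_le (hP : NoProperFiniteIndex P) (f : P →* H) (L : Subgroup H) [L.FiniteIndex] :
    f.range ≤ L := by
  rw [MonoidHom.range_eq_map, Subgroup.map_le_iff_le_comap]
  refine (hP (L.comap f) ⟨?_⟩).ge
  rw [Subgroup.index_comap]
  exact Subgroup.FiniteIndex.index_ne_zero (H := L.subgroupOf f.range)

theorem le_of_finiteIndex {T : Subgroup P} (hT : NoProperFiniteIndex T) (L : Subgroup P)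
    [L.FiniteIndex] : T ≤ L := by
  simpa using hT.range_le T.subtype L

theorem characteristic {T : Subgroup P} (hT : NoProperFiniteIndex T) [T.FiniteIndex] :
    T.Characteristic := by
  refine Subgroup.characteristic_iff_le_comap.2 fun φ => ?_
  have : (T.comap φ.toMonoidHom).FiniteIndex := ⟨by
    rw [Subgroup.index_comap_of_surjective T (f := φ.toMonoidHom) φ.surjective]
    exact Subgroup.FiniteIndex.index_ne_zero⟩
  exact hT.le_of_finiteIndex _

theorem mem_center_of_finite_conjugatesOf (hP : NoProperFiniteIndex P) {x : P}
    (hx : (conjugatesOf x).Finite) : x ∈ Subgroup.center P := by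
  have horbit : MulAction.orbit (ConjAct P) x = conjugatesOf x :=
    Set.ext fun _ => ConjAct.mem_orbit_conjAct.trans isConj_comm
  have hstab : MulAction.stabilizer (ConjAct P) x = ⊤ := by
    refine hP.of_surjective (f := ConjAct.toConjAct.toMonoidHom) ConjAct.toConjAct.surjective _ ⟨?_⟩
    rw [MulAction.index_stabilizer, horbit]
    exact ((Set.ncard_pos hx).2 ⟨x, mem_conjugatesOf_self⟩).ne'
  refine Subgroup.mem_center_iff.2 fun g => mul_inv_eq_iff_eq_mul.1 ?_
  have hg : ConjAct.toConjAct g ∈ MulAction.stabilizer (ConjAct P) x := hstab ▸ Subgroup.mem_top _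
  rwa [MulAction.mem_stabilizer_iff, ConjAct.toConjAct_smul] at hg

theorem le_center_of_finite_torsion (hP : NoProperFiniteIndex P) (T : Subgroup P) [T.Normal]
    (htors : IsMulTorsion T) (hT : ∀ n ≠ 0, {x : T | x ^ n = 1}.Finite) :
    T ≤ Subgroup.center P := by
  intro x hx
  obtain ⟨n, hn, hxn⟩ := (htors ⟨x, hx⟩).exists_pow_eq_one
  refine hP.mem_center_of_finite_conjugatesOf
    (((hT n hn.ne').image Subtype.val).subset fun y hy => ?_)
  obtain ⟨g, rfl⟩ := isConj_iff.1 hy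
  refine ⟨⟨g * x * g⁻¹, Subgroup.Normal.conj_mem ‹_› x hx g⟩, Subtype.ext ?_, rfl⟩
  simpa [conj_pow] using congrArg Subtype.val hxn

theorem subsingleton_of_forall_pow_eq_one {V : Type*} [CommGroup V] (hV : NoProperFiniteIndex V)
    (p : ℕ) [Fact p.Prime] (hpow : ∀ v : V, v ^ p = 1) : Subsingleton V := by
  refine subsingleton_of_forall_eq (1 : V) fun v => ?_
  by_contra hv
  obtain ⟨φ, hφ⟩ := exists_addMonoidHom_zmod_ne_zero (V := Additive V) p hpow hv
  let ψ : V →* Multiplicative (ZMod p) := AddMonoidHom.toMultiplicativeRight φ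
  have hker : ψ.ker = ⊤ := hV ψ.ker inferInstance
  exact hφ (hker ▸ Subgroup.mem_top v : v ∈ ψ.ker)

theorem pow_surjective {A : Type*} [CommGroup A] (hA : NoProperFiniteIndex A) (p : ℕ)
    [Fact p.Prime] : Function.Surjective fun a : A => a ^ p := by
  let R : Subgroup A := (powMonoidHom p).range
  have hquot : Subsingleton (A ⧸ R) := by
    have hR := hA.of_surjective (QuotientGroup.mk'_surjective R)
    refine hR.subsingleton_of_forall_pow_eq_one p ?_
    rintro ⟨a⟩
    exact (QuotientGroup.eq_one_iff (a ^ p)).2 ⟨a, rfl⟩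
  exact fun x => (QuotientGroup.eq_one_iff x).1 (Subsingleton.elim (x : A ⧸ R) 1)

end NoProperFiniteIndex

theorem exists_noProperFiniteIndex_of_index_le {b : ℕ}
    (hb : ∀ L : Subgroup P, L.FiniteIndex → L.index ≤ b) :
    ∃ T : Subgroup P, T.FiniteIndex ∧ NoProperFiniteIndex T := by
  let S : Set ℕ := {n | ∃ L : Subgroup P, L.FiniteIndex ∧ L.index = n}
  have hbdd : BddAbove S := ⟨b, by rintro _ ⟨L, hL, rfl⟩; exact hb L hL⟩
  obtain ⟨T, hTfin, hTmax⟩ := Nat.sSup_mem (s := S) ⟨_, ⊤, inferInstance, rfl⟩ hbdd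
  refine ⟨T, hTfin, fun L hL => Subgroup.index_eq_one.1 ?_⟩
  have hindex : (L.map T.subtype).index = L.index * T.index :=
    Subgroup.index_map_subtype L
  have hle : L.index * T.index ≤ 1 * T.index := by
    rw [← hindex, one_mul, hTmax]
    refine le_csSup hbdd ⟨_, ⟨?_⟩, rfl⟩
    rw [hindex]
    exact mul_ne_zero hL.index_ne_zero hTfin.index_ne_zero
  have := Nat.le_of_mul_le_mul_right hle (Nat.pos_of_ne_zero hTfin.index_ne_zero)
  have := hL.index_ne_zero
  omega

theorem index_le_mul_of_noProperFiniteIndex {N : Subgroup P} [N.Normal] {T : Subgroup N}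
    {U : Subgroup (P ⧸ N)} (hT : NoProperFiniteIndex T) (hU : NoProperFiniteIndex U)
    [T.FiniteIndex] [U.FiniteIndex] (L : Subgroup P) [L.FiniteIndex] :
    L.index ≤ T.index * U.index := by
  wlog hL : L.Normal
  · exact (Subgroup.index_antitone L.normalCore_le).trans
      (this hT hU L.normalCore L.normalCore_normal)
  have hmap : (L.map (QuotientGroup.mk' N)).index = (L ⊔ N).index := by
    rw [Subgroup.index_map, QuotientGroup.ker_mk', QuotientGroup.range_mk', Subgroup.index_top,
      mul_one]
  have : (L ⊔ N).FiniteIndex := Subgroup.finiteIndex_of_le (le_sup_left : L ≤ L ⊔ N)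
  have : (L.map (QuotientGroup.mk' N)).FiniteIndex :=
    ⟨hmap ▸ Subgroup.FiniteIndex.index_ne_zero⟩
  calc L.index = (L.subgroupOf N).index * (L.map (QuotientGroup.mk' N)).index := by
        rw [hmap, ← Subgroup.relIndex_mul_index (le_sup_left : L ≤ L ⊔ N),
          Subgroup.relIndex_sup_left, Subgroup.relIndex]
    _ ≤ T.index * U.index := Nat.mul_le_mul
        (Subgroup.index_antitone (hT.le_of_finiteIndex _))
        (Subgroup.index_antitone (hU.le_of_finiteIndex _))

end NoProperFiniteIndex

section FiniteTorsion

variable {G H : Type*} [Group G] [Group H]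

theorem finite_torsion_of_injective {f : G →* H} (hf : Function.Injective f) {n : ℕ}
    (hH : {x : H | x ^ n = 1}.Finite) : {x : G | x ^ n = 1}.Finite :=
  (hH.preimage hf.injOn).subset fun x (hx : x ^ n = 1) =>
    show f x ^ n = 1 by rw [← map_pow, hx, map_one]

theorem finite_torsion_comap {f : G →* H} (hf : Function.Injective f) {K : Subgroup H} {n : ℕ}
    (hK : {x : K | x ^ n = 1}.Finite) : {x : K.comap f | x ^ n = 1}.Finite :=
  finite_torsion_of_injective (f := f.subgroupComap K)
    (fun _ _ hxy => Subtype.ext (hf (congrArg Subtype.val hxy))) hK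

theorem finite_torsion_map {f : G →* H} (hf : Function.Injective f) {K : Subgroup G} {n : ℕ}
    (hK : {x : K | x ^ n = 1}.Finite) : {x : K.map f | x ^ n = 1}.Finite :=
  let e : K ≃* K.map f := K.equivMapOfInjective f hf
  finite_torsion_of_injective (f := e.symm.toMonoidHom) e.symm.injective hK

theorem finite_torsion_coset_of_le_center {T : Subgroup G} (hT : T ≤ Subgroup.center G) {n : ℕ}
    (hTfin : {t : T | t ^ n = 1}.Finite) {x : G} (hx : x ^ n = 1) :
    {y : G | y ^ n = 1 ∧ x⁻¹ * y ∈ T}.Finite := by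
  refine (hTfin.image fun t : T => x * t).subset fun y ⟨hy, hxy⟩ => ?_
  refine ⟨⟨x⁻¹ * y, hxy⟩, Subtype.ext ?_, mul_inv_cancel_left x y⟩
  have hcomm : Commute x (x⁻¹ * y) := Subgroup.mem_center_iff.1 (hT hxy) x
  simpa [hx, hy] using (hcomm.mul_pow n).symm

theorem isFiniteRelIndex_map_subtype {N : Subgroup G} (T : Subgroup N) [T.FiniteIndex] :
    (T.map N.subtype).IsFiniteRelIndex N := ⟨by
  rw [Subgroup.relIndex, Subgroup.subgroupOf,
    Subgroup.comap_map_eq_self_of_injective N.subtype_injective]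
  exact Subgroup.FiniteIndex.index_ne_zero⟩

theorem finite_image_mk_of_isFiniteRelIndex (T K : Subgroup G) [T.IsFiniteRelIndex K] :
    ((QuotientGroup.mk : G → G ⧸ T) '' K).Finite := by
  let j : K ⧸ T.subgroupOf K → G ⧸ T := Quotient.map' Subtype.val fun x y hxy => by
    rw [QuotientGroup.leftRel_apply] at hxy ⊢
    exact hxy
  refine (Set.finite_range j).subset ?_
  rintro _ ⟨x, hx, rfl⟩
  exact ⟨((⟨x, hx⟩ : K) : K ⧸ T.subgroupOf K), rfl⟩

theorem finite_of_finite_image_of_pow_eq_one (f : G →* H) {T : Subgroup G}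
    (hT : T ≤ Subgroup.center G) [T.IsFiniteRelIndex f.ker] {n : ℕ}
    (hTfin : {t : T | t ^ n = 1}.Finite) {S : Set G} (hS : ∀ x ∈ S, x ^ n = 1)
    (hfS : (f '' S).Finite) : S.Finite := by
  refine Set.Finite.of_finite_fibers f hfS ?_
  rintro _ ⟨x, -, rfl⟩
  refine Set.Finite.of_finite_fibers (QuotientGroup.mk : G → G ⧸ T) ?_ ?_
  · refine ((finite_image_mk_of_isFiniteRelIndex T f.ker).image (x • ·)).subset ?_
    rintro _ ⟨y, ⟨-, hy⟩, rfl⟩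
    refine ⟨_, ⟨x⁻¹ * y, f.eq_iff.1 hy, rfl⟩, ?_⟩
    exact congrArg QuotientGroup.mk (mul_inv_cancel_left x y)
  · rintro _ ⟨y, ⟨hy, -⟩, rfl⟩
    refine (finite_torsion_coset_of_le_center hT hTfin (hS y hy)).subset ?_
    rintro z ⟨⟨hz, -⟩, hzy⟩
    exact ⟨hS z hz, QuotientGroup.eq.1 (Eq.symm hzy)⟩

end FiniteTorsion

section IsDiscreteTorus

/-- A discrete torus, characterized without mention of a prime or of an isomorphism: the
`p`-groups among these are the finite powers of the Prüfer group, see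
`exists_mulEquiv_prufer_iff`. -/
structure IsDiscreteTorus (T : Type*) [Group T] : Prop where
  isMulCommutative : IsMulCommutative T
  noProperFiniteIndex : NoProperFiniteIndex T
  finite_torsion : ∀ n ≠ 0, {t : T | t ^ n = 1}.Finite

theorem IsDiscreteTorus.of_mulEquiv {T U : Type*} [Group T] [Group U] (hU : IsDiscreteTorus U)
    (e : T ≃* U) : IsDiscreteTorus T where
  isMulCommutative := by
    have := hU.isMulCommutative
    exact .of_comm fun x y => e.injective (by rw [map_mul, map_mul, mul_comm])
  noProperFiniteIndex :=
    hU.noProperFiniteIndex.of_surjective (f := e.symm.toMonoidHom) e.symm.surjective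
  finite_torsion n hn :=
    finite_torsion_of_injective (f := e.toMonoidHom) e.injective (hU.finite_torsion n hn)

theorem isDiscreteTorus_of_isFiniteRelIndex_ker {P H : Type*} [Group P] [Group H]
    [IsMulCommutative H] (hP : NoProperFiniteIndex P) (htors : IsMulTorsion P) (f : P →* H)
    (hH : ∀ n ≠ 0, {x : H | x ^ n = 1}.Finite) (T : Subgroup P) [T.Normal]
    [T.IsFiniteRelIndex f.ker] (hT : ∀ n ≠ 0, {t : T | t ^ n = 1}.Finite) :
    IsDiscreteTorus P := by
  have hTcenter : T ≤ Subgroup.center P :=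
    hP.le_center_of_finite_torsion T (htors.subgroup T) hT
  have hcenter (x : P) : x ∈ Subgroup.center P := by
    obtain ⟨n, hn, hxn⟩ := (htors x).exists_pow_eq_one
    refine hP.mem_center_of_finite_conjugatesOf
      (finite_of_finite_image_of_pow_eq_one f hTcenter (hT n hn.ne') ?_ ?_)
    · rintro y hy
      obtain ⟨g, rfl⟩ := isConj_iff.1 hy
      rw [conj_pow, hxn, mul_one, mul_inv_cancel]
    · refine (Set.finite_singleton (f x)).subset ?_
      rintro _ ⟨y, hy, rfl⟩
      exact (isConj_iff_eq.1 (f.map_isConj hy)).symm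
  refine ⟨.of_comm fun x y => (Subgroup.mem_center_iff.1 (hcenter y) x), hP, fun n hn => ?_⟩
  refine finite_of_finite_image_of_pow_eq_one f hTcenter (hT n hn) (fun _ hx => hx)
    ((hH n hn).subset ?_)
  rintro _ ⟨x, hx : x ^ n = 1, rfl⟩
  change f x ^ n = 1
  rw [← map_pow, hx, map_one]

theorem exists_isDiscreteTorus_of_extension {G : Type*} [Group G] (htors : IsMulTorsion G)
    {N : Subgroup G} [N.Normal] {T : Subgroup N} [T.FiniteIndex] (hT : IsDiscreteTorus T)
    {U : Subgroup (G ⧸ N)} [U.FiniteIndex] (hU : IsDiscreteTorus U) :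
    ∃ P : Subgroup G, P.FiniteIndex ∧ IsDiscreteTorus P := by
  obtain ⟨P, hPfin, hP⟩ := exists_noProperFiniteIndex_of_index_le fun L _ =>
    index_le_mul_of_noProperFiniteIndex hT.noProperFiniteIndex hU.noProperFiniteIndex L
  have := hT.noProperFiniteIndex.characteristic
  have := hU.isMulCommutative
  let f : P →* U := ((QuotientGroup.mk' N).comp P.subtype).codRestrict U fun x =>
    hP.range_le ((QuotientGroup.mk' N).comp P.subtype) U ⟨x, rfl⟩
  have hfker : f.ker.map P.subtype ≤ N := by
    rintro _ ⟨x, hx, rfl⟩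
    exact (QuotientGroup.eq_one_iff (x : G)).1 (congrArg Subtype.val hx)
  let K : Subgroup P := (T.map N.subtype).comap P.subtype
  have hrel : K.IsFiniteRelIndex f.ker := by
    have := isFiniteRelIndex_map_subtype T
    have := (T.map N.subtype).isFiniteRelIndex_of_le_right hfker
    exact ⟨by rw [Subgroup.relIndex_comap]; exact Subgroup.relIndex_ne_zero⟩
  exact ⟨P, hPfin, isDiscreteTorus_of_isFiniteRelIndex_ker hP (htors.subgroup P) f
    hU.finite_torsion K fun n hn => finite_torsion_comap P.subtype_injective
      (finite_torsion_map N.subtype_injective (hT.finite_torsion n hn))⟩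

end IsDiscreteTorus

section PGroup

variable {p : ℕ} {A B : Type*} [CommGroup A] [CommGroup B]

theorem nonempty_addEquiv_of_forall_nsmul_eq_zero {V W : Type*} [AddCommGroup V] [AddCommGroup W]
    [Finite V] (p : ℕ) [Fact p.Prime] (hV : ∀ v : V, p • v = 0) (hW : ∀ w : W, p • w = 0)
    (hcard : Nat.card V = Nat.card W) : Nonempty (V ≃+ W) := by
  have : Finite W := Nat.finite_of_card_ne_zero (hcard ▸ Nat.card_pos.ne')
  let _ : Module (ZMod p) V := AddCommGroup.zmodModule (n := p) hV
  let _ : Module (ZMod p) W := AddCommGroup.zmodModule (n := p) hW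
  rw [Module.natCard_eq_pow_finrank (K := ZMod p), Nat.card_zmod,
    Module.natCard_eq_pow_finrank (K := ZMod p), Nat.card_zmod] at hcard
  obtain ⟨e⟩ : Nonempty (V ≃ₗ[ZMod p] W) := FiniteDimensional.nonempty_linearEquiv_of_finrank_eq
    (Nat.pow_right_injective (Fact.out : p.Prime).two_le hcard)
  exact ⟨e.toAddEquiv⟩

theorem nonempty_mulEquiv_of_forall_pow_eq_one [Finite A] (p : ℕ) [Fact p.Prime]
    (hA : ∀ a : A, a ^ p = 1) (hB : ∀ b : B, b ^ p = 1) (hcard : Nat.card A = Nat.card B) :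
    Nonempty (A ≃* B) :=
  (nonempty_addEquiv_of_forall_nsmul_eq_zero (V := Additive A) (W := Additive B) p hA hB
    hcard).map MulEquiv.toAdditive.symm

theorem exists_addMonoidHom_extension {A B : Type*} [AddCommGroup A] [AddCommGroup B]
    (hB : ∀ n ≠ 0, Function.Surjective fun b : B => n • b) {K : AddSubgroup A} (g : K →+ B) :
    ∃ f : A →+ B, ∀ k : K, f k = g k := by
  let _ : DivisibleBy B ℕ := divisibleByOfSMulRightSurj B ℕ fun {n} hn => hB n hn
  let _ : DivisibleBy B ℤ := AddGroup.divisibleByIntOfDivisibleByNat B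
  obtain ⟨f, hf⟩ := (Module.Baer.of_divisible B).extension_property_addMonoidHom
    K.subtype K.subtype_injective g
  exact ⟨f, DFunLike.congr_fun hf⟩

theorem exists_monoidHom_extension (hB : ∀ n ≠ 0, Function.Surjective fun b : B => b ^ n)
    {K : Subgroup A} (g : K →* B) : ∃ f : A →* B, ∀ k : K, f k = g k := by
  obtain ⟨f, hf⟩ := exists_addMonoidHom_extension (B := Additive B) (K := K.toAddSubgroup) hB
    g.toAdditive
  exact ⟨f.toMultiplicative, hf⟩

theorem injective_of_isPGroup_of_torsion [Fact p.Prime] {G H : Type*} [Group G] [Group H]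
    (hG : IsPGroup p G) {f : G →* H} (hf : ∀ x : G, x ^ p = 1 → f x = 1 → x = 1) :
    Function.Injective f := by
  refine (injective_iff_map_eq_one f).2 fun x hx => by_contra fun hx1 => ?_
  have horder : orderOf (x ^ (orderOf x / p)) = p :=
    orderOf_pow_orderOf_div (hG.isOfFinOrder (NeZero.ne p) x).orderOf_pos.ne' (hG.dvd_orderOf hx1)
  have hone : x ^ (orderOf x / p) = 1 :=
    hf _ (orderOf_dvd_iff_pow_eq_one.1 horder.dvd) (by rw [map_pow, hx, one_pow])
  rw [hone, orderOf_one] at horder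
  exact (Fact.out : p.Prime).ne_one horder.symm

theorem surjective_of_isPGroup_of_torsion {G : Type*} [Group G] (hB : IsPGroup p B)
    (hG : Function.Surjective fun x : G => x ^ p) {f : G →* B}
    (hf : ∀ b : B, b ^ p = 1 → b ∈ f.range) : Function.Surjective f := by
  have hrange (k : ℕ) : ∀ b : B, b ^ p ^ k = 1 → b ∈ f.range := by
    induction k with
    | zero => exact fun b hb => ⟨1, by simpa using hb.symm⟩
    | succ k ih =>
      intro b hb
      obtain ⟨x, hx⟩ := ih (b ^ p) (by rwa [← pow_mul, ← pow_succ'])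
      obtain ⟨y, rfl⟩ := hG x
      have hdiv : b / f y ∈ f.range := hf _ (by rw [div_pow, ← hx, map_pow, div_self'])
      simpa using mul_mem hdiv (⟨y, rfl⟩ : f y ∈ f.range)
  intro b
  obtain ⟨k, hk⟩ := hB b
  exact hrange k b hk

theorem pow_surjective_of_isPGroup {G : Type*} [Group G] [Fact p.Prime] (hG : IsPGroup p G)
    (hp : Function.Surjective fun x : G => x ^ p) {n : ℕ} (hn : n ≠ 0) :
    Function.Surjective fun x : G => x ^ n := by
  obtain ⟨k, t, ht, rfl⟩ := Nat.exists_eq_pow_mul_and_not_dvd hn p (Fact.out : p.Prime).ne_one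
  have hcoprime : p.Coprime t := (Fact.out : p.Prime).coprime_iff_not_dvd.2 ht
  have hiterate := (hG.powEquiv hcoprime).surjective.comp (hp.iterate k)
  simpa only [pow_iterate, Function.comp_def, IsPGroup.powEquiv_apply, ← pow_mul] using hiterate

theorem nonempty_mulEquiv_of_card_torsion_eq [Fact p.Prime] (hA : IsPGroup p A) (hB : IsPGroup p B)
    (hAdiv : Function.Surjective fun a : A => a ^ p)
    (hBdiv : Function.Surjective fun b : B => b ^ p)
    [Finite (powMonoidHom p : A →* A).ker]
    (hcard : Nat.card (powMonoidHom p : A →* A).ker = Nat.card (powMonoidHom p : B →* B).ker) :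
    Nonempty (A ≃* B) := by
  obtain ⟨e⟩ := nonempty_mulEquiv_of_forall_pow_eq_one p
    (fun a : (powMonoidHom p : A →* A).ker => Subtype.ext a.2)
    (fun b : (powMonoidHom p : B →* B).ker => Subtype.ext b.2) hcard
  obtain ⟨f, hf⟩ := exists_monoidHom_extension
    (fun n hn => pow_surjective_of_isPGroup hB hBdiv hn)
    ((powMonoidHom p : B →* B).ker.subtype.comp e.toMonoidHom)
  refine ⟨MulEquiv.ofBijective f
    ⟨injective_of_isPGroup_of_torsion hA fun a ha hfa => ?_,
      surjective_of_isPGroup_of_torsion hB hAdiv fun b hb => ?_⟩⟩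
  · have he : e ⟨a, ha⟩ = 1 := Subtype.ext ((hf ⟨a, ha⟩).symm.trans hfa)
    exact congrArg Subtype.val ((map_eq_one_iff e e.injective).1 he)
  · exact ⟨e.symm ⟨b, hb⟩, (hf _).trans (congrArg Subtype.val (e.apply_symm_apply ⟨b, hb⟩))⟩

theorem isPGroup_of_extension {G : Type*} [Group G] {N : Subgroup G} [N.Normal]
    (hN : IsPGroup p N) (hQ : IsPGroup p (G ⧸ N)) : IsPGroup p G := by
  intro x
  obtain ⟨k, hk⟩ := hQ x
  obtain ⟨m, hm⟩ := hN ⟨x ^ p ^ k, (QuotientGroup.eq_one_iff _).1 hk⟩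
  exact ⟨k + m, by simpa [pow_add, pow_mul] using congrArg Subtype.val hm⟩

theorem isPGroup_pi {ι : Type*} [Finite ι] {G : ι → Type*} [∀ i, Group (G i)]
    (hG : ∀ i, IsPGroup p (G i)) : IsPGroup p (∀ i, G i) := by
  have := Fintype.ofFinite ι
  intro x
  choose k hk using fun i => hG i (x i)
  refine ⟨∑ i, k i, funext fun i => ?_⟩
  exact orderOf_dvd_iff_pow_eq_one.1 ((orderOf_dvd_of_pow_eq_one (hk i)).trans
    (pow_dvd_pow p (Finset.single_le_sum (fun _ _ => Nat.zero_le _) (Finset.mem_univ i))))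

end PGroup

namespace Prufer

variable {p : ℕ} [Fact p.Prime]

theorem isPGroup : IsPGroup p (Prufer p) := fun x =>
  (Multiplicative.toAdd x).2.imp fun _ hk => Subtype.ext hk

theorem pow_surjective : Function.Surjective fun x : Prufer p => x ^ p := by
  rintro ⟨x, k, hk⟩
  let y : AddCircle (1 : ℚ) := DivisibleBy.div x (p : ℤ)
  have hy : p • y = x := by
    rw [← natCast_zsmul]
    exact DivisibleBy.div_cancel _ (Int.natCast_ne_zero.2 (NeZero.ne p))
  exact ⟨.ofAdd ⟨y, k + 1, by rw [pow_succ, mul_smul, hy, hk]⟩, Subtype.ext hy⟩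

theorem encard_torsion_le {n : ℕ} (hn : n ≠ 0) : {x : Prufer p | x ^ n = 1}.encard ≤ n := by
  have hregular : IsSMulRegular ℚ n := .of_right_eq_zero_of_smul fun _ => by simp [hn]
  refine le_trans ?_ (AddCircle.card_torsion_le_of_isSMulRegular (1 : ℚ) n hn hregular)
  refine Set.encard_le_encard_of_injOn (f := fun x => (Multiplicative.toAdd x).1) ?_
    Subtype.val_injective.injOn
  exact fun x hx => congrArg Subtype.val hx

theorem finite_torsion {n : ℕ} (hn : n ≠ 0) : {x : Prufer p | x ^ n = 1}.Finite :=
  Set.finite_of_encard_le_coe (encard_torsion_le hn)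

theorem exists_orderOf_eq : ∃ x : Prufer p, orderOf x = p := by
  have horder : addOrderOf (((1 : ℚ) / p : ℚ) : AddCircle (1 : ℚ)) = p :=
    AddCircle.addOrderOf_period_div (NeZero.pos p)
  refine ⟨.ofAdd ⟨(((1 : ℚ) / p : ℚ) : AddCircle (1 : ℚ)), 1, ?_⟩, ?_⟩
  · rw [pow_one]
    exact addOrderOf_dvd_iff_nsmul_eq_zero.1 horder.dvd
  · exact (AddSubgroup.addOrderOf_coe _).symm.trans horder

theorem natCard_ker_powMonoidHom : Nat.card (powMonoidHom p : Prufer p →* Prufer p).ker = p := by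
  have : Finite (powMonoidHom p : Prufer p →* Prufer p).ker := finite_torsion (NeZero.ne p)
  refine Nat.le_antisymm ?_ ?_
  · refine ENat.natCast_le_natCast.1 ?_
    rw [← ENat.card_eq_coe_natCard]
    exact encard_torsion_le (NeZero.ne p)
  · obtain ⟨x, hx⟩ := exists_orderOf_eq (p := p)
    have hmem : x ∈ (powMonoidHom p : Prufer p →* Prufer p).ker :=
      orderOf_dvd_iff_pow_eq_one.1 hx.dvd
    exact hx.symm.trans_le ((Subgroup.orderOf_mk x hmem).symm.trans_le orderOf_le_card)

end Prufer

section Classification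

variable {p : ℕ} [Fact p.Prime]

theorem pi_prufer_pow_surjective (ι : Type*) :
    Function.Surjective fun x : ι → Prufer p => x ^ p := fun x =>
  (Classical.axiomOfChoice fun i => Prufer.pow_surjective (x i)).imp fun _ hy => funext hy

theorem finite_torsion_pi_prufer (ι : Type*) [Finite ι] {n : ℕ} (hn : n ≠ 0) :
    {x : ι → Prufer p | x ^ n = 1}.Finite :=
  (Set.Finite.pi' fun _ => Prufer.finite_torsion hn).subset fun _ hx i => congrFun hx i

theorem natCard_ker_powMonoidHom_pi_prufer (r : ℕ) :
    Nat.card (powMonoidHom p : (Fin r → Prufer p) →* _).ker = p ^ r := by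
  let e : (powMonoidHom p : (Fin r → Prufer p) →* _).ker ≃
      (Fin r → (powMonoidHom p : Prufer p →* Prufer p).ker) :=
    { toFun x i := ⟨x.1 i, congrFun x.2 i⟩
      invFun y := ⟨fun i => (y i).1, funext fun i => (y i).2⟩ }
  rw [Nat.card_congr e, Nat.card_fun, Prufer.natCard_ker_powMonoidHom, Nat.card_fin]

theorem isDiscreteTorus_pi_prufer (r : ℕ) : IsDiscreteTorus (Fin r → Prufer p) where
  isMulCommutative := inferInstance
  noProperFiniteIndex := .of_forall_pow_surjective fun _ =>
    pow_surjective_of_isPGroup (isPGroup_pi fun _ => Prufer.isPGroup) (pi_prufer_pow_surjective _)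
  finite_torsion _ := finite_torsion_pi_prufer _

theorem IsDiscreteTorus.exists_mulEquiv_prufer {T : Type*} [Group T] (hT : IsDiscreteTorus T)
    (hpT : IsPGroup p T) : ∃ r : ℕ, Nonempty (T ≃* (Fin r → Prufer p)) := by
  have := hT.isMulCommutative
  have : Finite (powMonoidHom p : T →* T).ker := hT.finite_torsion p (NeZero.ne p)
  obtain ⟨r, hr⟩ := IsPGroup.iff_card.1 (hpT.to_subgroup (powMonoidHom p : T →* T).ker)
  exact ⟨r, nonempty_mulEquiv_of_card_torsion_eq hpT (isPGroup_pi fun _ => Prufer.isPGroup)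
    (hT.noProperFiniteIndex.pow_surjective p) (pi_prufer_pow_surjective _)
    (hr.trans (natCard_ker_powMonoidHom_pi_prufer r).symm)⟩

theorem exists_mulEquiv_prufer_iff {T : Type*} [Group T] :
    (∃ r : ℕ, Nonempty (T ≃* (Fin r → Prufer p))) ↔ IsPGroup p T ∧ IsDiscreteTorus T := by
  refine ⟨fun ⟨r, ⟨e⟩⟩ => ⟨?_, ?_⟩, fun ⟨hpT, hT⟩ => hT.exists_mulEquiv_prufer hpT⟩
  · exact (isPGroup_pi fun _ => Prufer.isPGroup).of_equiv e.symm
  · exact (isDiscreteTorus_pi_prufer r).of_mulEquiv e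

theorem isDiscretePToral_iff {G : Type*} [Group G] :
    IsDiscretePToral p G ↔
      IsPGroup p G ∧ ∃ T : Subgroup G, T.FiniteIndex ∧ IsDiscreteTorus T := by
  simp only [IsDiscretePToral, exists_mulEquiv_prufer_iff]
  constructor
  · rintro ⟨T, _, ⟨hpT, hT⟩, _, hpQ⟩
    exact ⟨isPGroup_of_extension hpT hpQ, T, Subgroup.finiteIndex_of_finite_quotient, hT⟩
  · rintro ⟨hpG, T, _, hT⟩
    have := hT.noProperFiniteIndex.characteristic
    exact ⟨T, inferInstance, ⟨hpG.to_subgroup T, hT⟩, inferInstance, hpG.to_quotient T⟩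

end Classification

/-- An extension of a discrete `p`-toral group by a discrete `p`-toral group is
discrete `p`-toral. -/
theorem isDiscretePToral_of_extension (p : ℕ) [Fact p.Prime] (G : Type*) [Group G]
    (N : Subgroup G) [N.Normal]
    (hN : IsDiscretePToral p N) (hQ : IsDiscretePToral p (G ⧸ N)) :
    IsDiscretePToral p G := by
  obtain ⟨hpN, T, _, hT⟩ := isDiscretePToral_iff.1 hN
  obtain ⟨hpQ, U, _, hU⟩ := isDiscretePToral_iff.1 hQ
  have hpG : IsPGroup p G := isPGroup_of_extension hpN hpQ
  have htors : IsMulTorsion G := hpG.isOfFinOrder (NeZero.ne p)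
  exact isDiscretePToral_iff.2 ⟨hpG, exists_isDiscreteTorus_of_extension htors hT hU⟩
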